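/- Under the Entropy Setup, consider G(ρ,u) = η̌_ρ(ρ,ρu) + u η̌_m(ρ,ρu) as a function of the variables (ρ,u) with ρ > 0, u ∈ ℝ. Then there exists a constant M > 0 depending only on γ such that |∂_ρ G(ρ,u)| ≤ M(ρ^{θ−1}|u| + ρ^{2θ−1}) and |∂_u G(ρ,u)| ≤ M(|u| + ρ^θ) for all ρ > 0 and u ∈ ℝ. -/

import Mathlib

open MeasureTheory Real Set

noncomputable section

/-- The Lions–Perthame–Tadmor weak entropy
`η̌(ρ,m) = ∫_ℝ ½ s|s| [ρ^{2θ} − (m/ρ−s)²]_+^{(3−γ)/(2(γ−1))} ds`, with `2θ = γ−1`. -/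
def etaCheck (γ ρ m : ℝ) : ℝ :=
  ∫ s : ℝ, (1/2) * s * |s| *
    (max (ρ ^ (γ - 1) - (m / ρ - s) ^ (2:ℕ)) 0) ^ ((3 - γ) / (2 * (γ - 1)))

/-- The associated weak entropy flux
`q̌(ρ,m) = ∫_ℝ ½ s|s| (θs + (1−θ)m/ρ) [ρ^{2θ} − (m/ρ−s)²]_+^{(3−γ)/(2(γ−1))} ds`. -/
def qCheck (γ ρ m : ℝ) : ℝ :=
  ∫ s : ℝ, (1/2) * s * |s| * (((γ - 1)/2) * s + (1 - (γ - 1)/2) * (m / ρ)) *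
    (max (ρ ^ (γ - 1) - (m / ρ - s) ^ (2:ℕ)) 0) ^ ((3 - γ) / (2 * (γ - 1)))

/-- Partial derivative `η̌_ρ` in the variables `(ρ,m)`. -/
def etaCheckRho (γ ρ m : ℝ) : ℝ := deriv (fun x => etaCheck γ x m) ρ

/-- Partial derivative `η̌_m` in the variables `(ρ,m)`. -/
def etaCheckM (γ ρ m : ℝ) : ℝ := deriv (fun y => etaCheck γ ρ y) m

/-- The modified entropy `η̃(ρ,m) = η̌(ρ,m) − η̌_ρ(ρ̄,0)(ρ−ρ̄) − η̌_m(ρ̄,0)m`. -/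
def etaTilde (γ ρbar ρ m : ℝ) : ℝ :=
  etaCheck γ ρ m - etaCheckRho γ ρbar 0 * (ρ - ρbar) - etaCheckM γ ρbar 0 * m

/-- The modified entropy flux
`q̃(ρ,m) = q̌(ρ,m) − η̌_ρ(ρ̄,0)m − η̌_m(ρ̄,0)(m²/ρ + p(ρ))`, `p(ρ) = κρ^γ`. -/
def qTilde (γ κ ρbar ρ m : ℝ) : ℝ :=
  qCheck γ ρ m - etaCheckRho γ ρbar 0 * m
    - etaCheckM γ ρbar 0 * (m ^ (2:ℕ) / ρ + κ * ρ ^ γ)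

/-- `η̃_ρ` in the variables `(ρ,m)`. -/
def etaTildeRho (γ ρbar ρ m : ℝ) : ℝ := deriv (fun x => etaTilde γ ρbar x m) ρ

/-- `η̃_m` in the variables `(ρ,m)`. -/
def etaTildeM (γ ρbar ρ m : ℝ) : ℝ := deriv (fun y => etaTilde γ ρbar ρ y) m

/-- `G(ρ,u) = η̌_ρ(ρ,ρu) + u η̌_m(ρ,ρu)` as a function of `(ρ,u)`. -/
def Gfun (γ ρ u : ℝ) : ℝ := etaCheckRho γ ρ (ρ * u) + u * etaCheckM γ ρ (ρ * u)

/-- The map `x ↦ x|x|/2` has derivative `|x|`, with a quadratic remainder. -/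
lemma abs_half_mul_abs_remainder_le (x y : ℝ) :
    |1/2 * y * |y| - 1/2 * x * |x| - |x| * (y - x)| ≤ (y - x) ^ 2 := by
  rcases abs_cases x with ⟨hx, hx'⟩ | ⟨hx, hx'⟩ <;> rcases abs_cases y with ⟨hy, hy'⟩ | ⟨hy, hy'⟩ <;>
    rw [hx, hy, abs_le] <;> constructor <;> nlinarith [sq_nonneg (x - y), sq_nonneg (x + y)]

/-- A nonnegative integrable weight supported in `[-1, 1]`. -/
structure IsUnitWeight (w : ℝ → ℝ) : Prop where
  nonneg : ∀ t, 0 ≤ w t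
  eq_zero : ∀ t, 1 < |t| → w t = 0
  integrable : Integrable w

namespace IsUnitWeight

variable {w : ℝ → ℝ}

lemma integrable_mul (hw : IsUnitWeight w) {f : ℝ → ℝ} (hf : Continuous f) :
    Integrable (fun t => f t * w t) := by
  have hsupp : Function.support (fun t => f t * w t) ⊆ Icc (-1) 1 := by
    intro t ht
    by_contra hcon
    refine ht ?_
    have : 1 < |t| := by
      by_contra hle
      exact hcon (abs_le.mp (not_lt.mp hle))
    simp [hw.eq_zero t this]
  rw [← integrableOn_iff_integrable_of_support_subset hsupp]
  exact hw.integrable.integrableOn.continuousOn_mul hf.continuousOn isCompact_Icc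

lemma integral_nonneg (hw : IsUnitWeight w) : 0 ≤ ∫ t, w t :=
  MeasureTheory.integral_nonneg hw.nonneg

lemma abs_integral_mul_le (hw : IsUnitWeight w) {f : ℝ → ℝ} {C : ℝ}
    (hf : ∀ t, |t| ≤ 1 → |f t| ≤ C) : |∫ t, f t * w t| ≤ C * ∫ t, w t := by
  rw [← integral_const_mul, ← Real.norm_eq_abs]
  refine norm_integral_le_of_norm_le (hw.integrable.const_mul C) (ae_of_all _ fun t => ?_)
  rw [norm_mul, Real.norm_eq_abs, Real.norm_eq_abs, abs_of_nonneg (hw.nonneg t)]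
  rcases le_or_gt |t| 1 with ht | ht
  · exact mul_le_mul_of_nonneg_right (hf t ht) (hw.nonneg t)
  · simp [hw.eq_zero t ht]

/-- Chain rule for `x ↦ ∫ φ(a x + b x t) w t dt` with `φ s = s|s|/2`. -/
lemma hasDerivAt_integral (hw : IsUnitWeight w) {a b : ℝ → ℝ} {a' b' x₀ : ℝ}
    (ha : HasDerivAt a a' x₀) (hb : HasDerivAt b b' x₀) :
    HasDerivAt (fun x => ∫ t, (1/2 * (a x + b x * t) * |a x + b x * t|) * w t)
      (a' * (∫ t, |a x₀ + b x₀ * t| * w t) + b' * ∫ t, (t * |a x₀ + b x₀ * t|) * w t) x₀ := by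
  set A := ∫ t, |a x₀ + b x₀ * t| * w t with hA
  set B := ∫ t, (t * |a x₀ + b x₀ * t|) * w t with hB
  set H := fun x => ∫ t, (1/2 * (a x + b x * t) * |a x + b x * t|) * w t with hH
  have hlin : HasDerivAt (fun x => H x₀ + (a x - a x₀) * A + (b x - b x₀) * B)
      (a' * A + b' * B) x₀ :=
    (((ha.sub_const _).mul_const A).const_add _).add ((hb.sub_const _).mul_const B)
  have hrem : ∀ x, ‖H x - (H x₀ + (a x - a x₀) * A + (b x - b x₀) * B)‖ ≤
      (∫ t, w t) * ‖(|a x - a x₀| + |b x - b x₀|) ^ 2‖ := by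
    intro x
    have i1 : Integrable fun t => (1/2 * (a x + b x * t) * |a x + b x * t|) * w t :=
      hw.integrable_mul (by fun_prop)
    have i2 : Integrable fun t => (1/2 * (a x₀ + b x₀ * t) * |a x₀ + b x₀ * t|) * w t :=
      hw.integrable_mul (by fun_prop)
    have i3 : Integrable fun t => |a x₀ + b x₀ * t| * w t := hw.integrable_mul (by fun_prop)
    have i4 : Integrable fun t => (t * |a x₀ + b x₀ * t|) * w t := hw.integrable_mul (by fun_prop)
    have heq : H x - (H x₀ + (a x - a x₀) * A + (b x - b x₀) * B) =
        ∫ t, (1/2 * (a x + b x * t) * |a x + b x * t|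
          - 1/2 * (a x₀ + b x₀ * t) * |a x₀ + b x₀ * t|
          - |a x₀ + b x₀ * t| * ((a x + b x * t) - (a x₀ + b x₀ * t))) * w t := by
      rw [hH, hA, hB]
      simp only
      rw [← integral_const_mul, ← integral_const_mul, ← integral_add i2 (i3.const_mul _),
        ← integral_add (i2.fun_add (i3.const_mul _)) (i4.const_mul _),
        ← integral_sub i1 ((i2.fun_add (i3.const_mul _)).fun_add (i4.const_mul _))]
      congr 1
      ext t
      ring
    rw [heq, Real.norm_eq_abs, mul_comm, Real.norm_eq_abs,
      abs_of_nonneg (sq_nonneg (|a x - a x₀| + |b x - b x₀|))]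
    refine hw.abs_integral_mul_le fun t ht => (abs_half_mul_abs_remainder_le _ _).trans ?_
    rw [← sq_abs]
    refine pow_le_pow_left₀ (abs_nonneg _) ?_ 2
    calc |a x + b x * t - (a x₀ + b x₀ * t)| = |(a x - a x₀) + (b x - b x₀) * t| := by ring_nf
      _ ≤ |a x - a x₀| + |b x - b x₀| * |t| := (abs_add_le _ _).trans_eq (by rw [abs_mul])
      _ ≤ |a x - a x₀| + |b x - b x₀| := by
        gcongr
        exact mul_le_of_le_one_right (abs_nonneg _) ht
  have hbig : (fun x => H x - (H x₀ + (a x - a x₀) * A + (b x - b x₀) * B))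
      =O[nhds x₀] fun x => ‖x - x₀‖ ^ 2 := by
    refine (Asymptotics.IsBigO.of_bound _ (Filter.Eventually.of_forall hrem)).trans ?_
    exact ((ha.isBigO_sub.norm_norm.add hb.isBigO_sub.norm_norm)).pow 2
  have hzero : HasDerivAt (fun x => H x - (H x₀ + (a x - a x₀) * A + (b x - b x₀) * B)) 0 x₀ := by
    have := (hbig.hasFDerivAt (𝕜 := ℝ) one_lt_two).hasDerivAt
    simpa using this
  simpa using hzero.fun_add hlin

/-- The averaged function `∫ (φ(u + rt) + θ r t |u + rt|) w t dt` with `φ s = s|s|/2`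
is locally Lipschitz in `(u, r)`, with constant of order `|u| + r`. -/
lemma abs_integral_sub_le (hw : IsUnitWeight w) {θ u v r r' : ℝ} (hθ : 0 ≤ θ) (hr : 0 ≤ r)
    (hv : |v - u| ≤ r) (hr' : |r' - r| ≤ r) :
    |((∫ t, (1/2 * (v + r' * t) * |v + r' * t|) * w t)
          + θ * r' * ∫ t, (t * |v + r' * t|) * w t)
        - ((∫ t, (1/2 * (u + r * t) * |u + r * t|) * w t)
          + θ * r * ∫ t, (t * |u + r * t|) * w t)|
      ≤ 4 * (1 + θ) * (∫ t, w t) * (|u| + r) * (|v - u| + |r' - r|) := by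
  have i1 : Integrable fun t => (1/2 * (v + r' * t) * |v + r' * t|) * w t :=
    hw.integrable_mul (by fun_prop)
  have i2 : Integrable fun t => (t * |v + r' * t|) * w t := hw.integrable_mul (by fun_prop)
  have i3 : Integrable fun t => (1/2 * (u + r * t) * |u + r * t|) * w t :=
    hw.integrable_mul (by fun_prop)
  have i4 : Integrable fun t => (t * |u + r * t|) * w t := hw.integrable_mul (by fun_prop)
  rw [← integral_const_mul, ← integral_const_mul, ← integral_add i1 (i2.const_mul _),
    ← integral_add i3 (i4.const_mul _),
    ← integral_sub (i1.fun_add (i2.const_mul _)) (i3.fun_add (i4.const_mul _))]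
  set δ := |v - u| + |r' - r| with hδ
  have hδ0 : 0 ≤ δ := by positivity
  have key : ∀ t : ℝ, |t| ≤ 1 →
      |(1/2 * (v + r' * t) * |v + r' * t| - 1/2 * (u + r * t) * |u + r * t|)
        + θ * (t * (r' * |v + r' * t| - r * |u + r * t|))|
      ≤ 4 * (1 + θ) * (|u| + r) * δ := by
    intro t ht
    set y := v + r' * t with hy
    set x := u + r * t with hx
    have hyx : |y - x| ≤ δ := by
      calc |y - x| = |(v - u) + (r' - r) * t| := by rw [hy, hx]; ring_nf
        _ ≤ |v - u| + |r' - r| * |t| := (abs_add_le _ _).trans_eq (by rw [abs_mul])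
        _ ≤ δ := by
          rw [hδ]
          gcongr
          exact mul_le_of_le_one_right (abs_nonneg _) ht
    have hxle : |x| ≤ |u| + r := by
      calc |x| ≤ |u| + |r| * |t| := (abs_add_le _ _).trans_eq (by rw [abs_mul])
        _ ≤ |u| + r := by
          rw [abs_of_nonneg hr]
          gcongr
          exact mul_le_of_le_one_right hr ht
    have habs : |(|y| - |x|)| ≤ δ := (abs_abs_sub_abs_le_abs_sub y x).trans hyx
    have hδr : δ ≤ 2 * r := by linarith
    have hyle : |y| ≤ |u| + 3 * r := by linarith [(abs_le.mp habs).2]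
    have hφ : |(1/2 * y * |y| - 1/2 * x * |x|)| ≤ (|u| + 3 * r) * δ := by
      have h := abs_half_mul_abs_remainder_le x y
      have h2 : |(|x| * (y - x))| ≤ (|u| + r) * δ := by
        rw [abs_mul, abs_abs]
        exact mul_le_mul hxle hyx (abs_nonneg _) (by positivity)
      have h3 : (y - x) ^ 2 ≤ 2 * r * δ := by
        rw [← sq_abs, sq]
        exact mul_le_mul (hyx.trans hδr) hyx (abs_nonneg _) (by positivity)
      rw [abs_le] at h h2 ⊢
      constructor <;> linarith [h.1, h.2, h2.1, h2.2]
    have hprod : |(r' * |y| - r * |x|)| ≤ (|u| + 4 * r) * δ := by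
      calc |(r' * |y| - r * |x|)| = |(r' - r) * |y| + r * (|y| - |x|)| := by ring_nf
        _ ≤ |r' - r| * |y| + r * |(|y| - |x|)| :=
          (abs_add_le _ _).trans_eq (by rw [abs_mul, abs_mul, abs_abs, abs_of_nonneg hr])
        _ ≤ δ * (|u| + 3 * r) + r * δ := by
          gcongr
          rw [hδ]
          linarith [abs_nonneg (v - u)]
        _ = _ := by ring
    have hsecond : |θ * (t * (r' * |y| - r * |x|))| ≤ θ * ((|u| + 4 * r) * δ) := by
      rw [abs_mul, abs_mul, abs_of_nonneg hθ]
      exact mul_le_mul_of_nonneg_left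
        ((mul_le_of_le_one_left (abs_nonneg _) ht).trans hprod) hθ
    refine (abs_add_le _ _).trans ((add_le_add hφ hsecond).trans ?_)
    have h1 : 0 ≤ |u| * δ := by positivity
    have h2 : 0 ≤ r * δ := by positivity
    have h3 : 0 ≤ θ * (|u| * δ) := by positivity
    nlinarith
  have hint := hw.abs_integral_mul_le key
  calc _ = |∫ t, ((1/2 * (v + r' * t) * |v + r' * t| - 1/2 * (u + r * t) * |u + r * t|)
        + θ * (t * (r' * |v + r' * t| - r * |u + r * t|))) * w t| := by
        congr 2
        ext t
        ring
    _ ≤ _ := hint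
    _ = _ := by ring

end IsUnitWeight

/-- The weight `(1 - t²)₊^p` for `p > -1`, `p ≠ 0`; the value `0 ^ 0 = 1` rules out `p = 0`. -/
lemma isUnitWeight_rpow {p : ℝ} (hp : -1 < p) (hp0 : p ≠ 0) :
    IsUnitWeight fun t => (max (1 - t ^ 2) 0) ^ p := by
  have hzero : ∀ t : ℝ, 1 ≤ |t| → (max (1 - t ^ 2) 0) ^ p = 0 := by
    intro t ht
    have : 1 ≤ t ^ 2 := by rwa [one_le_sq_iff_one_le_abs]
    rw [max_eq_right (by linarith), Real.zero_rpow hp0]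
  refine ⟨fun t => by positivity, fun t ht => hzero t ht.le, ?_⟩
  have hsupp : Function.support (fun t : ℝ => (max (1 - t ^ 2) 0) ^ p) ⊆ Ioc (-1) 1 := by
    intro t ht
    by_contra hcon
    refine ht (hzero t ?_)
    by_contra hle
    have := abs_lt.mp (not_le.mp hle)
    exact hcon ⟨this.1, this.2.le⟩
  rw [← integrableOn_iff_integrable_of_support_subset hsupp]
  have hleft : IntervalIntegrable (fun t : ℝ => (1 - t) ^ p) volume (-1) 1 := by
    have h := (intervalIntegral.intervalIntegrable_rpow' (a := 2) (b := 0) hp).comp_sub_left 1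
    norm_num at h
    exact h
  have hright : IntervalIntegrable (fun t : ℝ => (1 + t) ^ p) volume (-1) 1 := by
    have h := (intervalIntegral.intervalIntegrable_rpow' (a := 0) (b := 2) hp).comp_add_left 1
    norm_num at h
    exact h
  have hone : IntervalIntegrable (fun _ : ℝ => (1 : ℝ)) volume (-1) 1 := intervalIntegrable_const
  have hdom := ((hone.add hleft).add hright).1
  refine Integrable.mono' hdom (Measurable.aestronglyMeasurable (by fun_prop)) ?_
  filter_upwards [ae_restrict_mem measurableSet_Ioc] with t ht
  have hm : (0 : ℝ) ≤ (1 - t) ^ p := Real.rpow_nonneg (by linarith [ht.2]) _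
  have hpl : (0 : ℝ) ≤ (1 + t) ^ p := Real.rpow_nonneg (by linarith [ht.1]) _
  rw [Real.norm_eq_abs, abs_of_nonneg (by positivity)]
  rcases eq_or_lt_of_le ht.2 with h1 | h1
  · rw [hzero t (by simp [h1])]
    positivity
  have hpos : 0 < 1 - t ^ 2 := by nlinarith [ht.1]
  rw [max_eq_left hpos.le]
  rcases le_or_gt 0 p with h | h
  · have : (1 - t ^ 2) ^ p ≤ 1 := Real.rpow_le_one hpos.le (by nlinarith) h
    linarith
  rcases le_or_gt 0 t with h0 | h0
  · have : (1 - t ^ 2) ^ p ≤ (1 - t) ^ p :=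
      Real.rpow_le_rpow_of_nonpos (by linarith) (by nlinarith) h.le
    linarith
  · have : (1 - t ^ 2) ^ p ≤ (1 + t) ^ p :=
      Real.rpow_le_rpow_of_nonpos (by linarith [ht.1]) (by nlinarith [ht.1]) h.le
    linarith

/-- The kinetic weight `(1 - t²)₊^λ` with `λ = (3 - γ) / (2(γ - 1))`. -/
def kineticWeight (γ t : ℝ) : ℝ := (max (1 - t ^ 2) 0) ^ ((3 - γ) / (2 * (γ - 1)))

lemma isUnitWeight_kineticWeight {γ : ℝ} (hγ : 1 < γ) (hγ3 : γ ≠ 3) :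
    IsUnitWeight (kineticWeight γ) := by
  refine isUnitWeight_rpow ?_ ?_
  · rw [lt_div_iff₀ (by linarith)]
    linarith
  · exact div_ne_zero (sub_ne_zero.mpr hγ3.symm) (by linarith)

/-- Rescaling `s = m/ρ + ρ^θ t` turns the entropy into an average against the kinetic weight. -/
lemma etaCheck_eq {γ ρ : ℝ} (hγ : 1 < γ) (hρ : 0 < ρ) (m : ℝ) :
    etaCheck γ ρ m = ρ * ∫ t, (1/2 * (m / ρ + ρ ^ ((γ - 1) / 2) * t)
      * |m / ρ + ρ ^ ((γ - 1) / 2) * t|) * kineticWeight γ t := by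
  set r := ρ ^ ((γ - 1) / 2) with hr
  set u := m / ρ with hu
  set p := (3 - γ) / (2 * (γ - 1)) with hp
  have hrpos : 0 < r := Real.rpow_pos_of_pos hρ _
  have hr2 : ρ ^ (γ - 1) = r ^ 2 := by
    rw [hr, ← Real.rpow_natCast, ← Real.rpow_mul hρ.le]
    congr 1
    push_cast
    ring
  have hscale : r * (r ^ 2) ^ p = ρ := by
    rw [← hr2, hr, ← Real.rpow_mul hρ.le, ← Real.rpow_add hρ]
    have : (γ - 1) / 2 + (γ - 1) * p = 1 := by
      have : γ - 1 ≠ 0 := by linarith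
      rw [hp]
      field_simp
      ring
    rw [this, Real.rpow_one]
  set F : ℝ → ℝ := fun s => (1/2) * s * |s| * (max (ρ ^ (γ - 1) - (u - s) ^ (2:ℕ)) 0) ^ p with hF
  have hshift : etaCheck γ ρ m = ∫ s, F (u + s) := by
    rw [integral_add_left_eq_self F u, etaCheck]
  have hmul := Measure.integral_comp_mul_left (fun s => F (u + s)) r
  rw [abs_of_pos (inv_pos.mpr hrpos), smul_eq_mul, ← hshift] at hmul
  have hsolve : etaCheck γ ρ m = r * ∫ t, F (u + r * t) := by
    rw [hmul, mul_inv_cancel_left₀ hrpos.ne']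
  rw [hsolve, ← integral_const_mul, ← integral_const_mul]
  congr 1
  ext t
  have hmax : max (ρ ^ (γ - 1) - (u - (u + r * t)) ^ (2:ℕ)) 0 = r ^ 2 * max (1 - t ^ 2) 0 := by
    rw [hr2, mul_max_of_nonneg _ _ (sq_nonneg r)]
    congr 1 <;> ring
  rw [hF]
  simp only
  rw [hmax, Real.mul_rpow (sq_nonneg r) (le_max_right _ _), kineticWeight, ← hp]
  calc _ = (r * (r ^ 2) ^ p) * (1/2 * (u + r * t) * |u + r * t| * (max (1 - t ^ 2) 0) ^ p) := by
        ring
    _ = _ := by rw [hscale]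

lemma etaCheckM_eq {γ ρ : ℝ} (hγ : 1 < γ) (hγ3 : γ ≠ 3) (hρ : 0 < ρ) (u : ℝ) :
    etaCheckM γ ρ (ρ * u) =
      ∫ t, |u + ρ ^ ((γ - 1) / 2) * t| * kineticWeight γ t := by
  have hd := ((isUnitWeight_kineticWeight hγ hγ3).hasDerivAt_integral
    ((hasDerivAt_id (ρ * u)).div_const ρ)
    (hasDerivAt_const (ρ * u) (ρ ^ ((γ - 1) / 2)))).const_mul ρ
  have hfun : (fun y => etaCheck γ ρ y) = fun y => ρ * ∫ t,
      (1/2 * (y / ρ + ρ ^ ((γ - 1) / 2) * t) * |y / ρ + ρ ^ ((γ - 1) / 2) * t|)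
        * kineticWeight γ t := funext fun y => etaCheck_eq hγ hρ y
  rw [etaCheckM, hfun]
  refine hd.deriv.trans ?_
  simp only [id, mul_div_cancel_left₀ u hρ.ne']
  field_simp
  ring

lemma etaCheckRho_eq {γ ρ : ℝ} (hγ : 1 < γ) (hγ3 : γ ≠ 3) (hρ : 0 < ρ) (u : ℝ) :
    etaCheckRho γ ρ (ρ * u) =
      (∫ t, (1/2 * (u + ρ ^ ((γ - 1) / 2) * t) * |u + ρ ^ ((γ - 1) / 2) * t|)
          * kineticWeight γ t)
        - u * (∫ t, |u + ρ ^ ((γ - 1) / 2) * t| * kineticWeight γ t)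
        + (γ - 1) / 2 * ρ ^ ((γ - 1) / 2) *
          ∫ t, (t * |u + ρ ^ ((γ - 1) / 2) * t|) * kineticWeight γ t := by
  have ha : HasDerivAt (fun x => ρ * u / x) (-(u / ρ)) ρ := by
    have h := (hasDerivAt_inv hρ.ne').const_mul (ρ * u)
    have he : (ρ * u) * -(ρ ^ 2)⁻¹ = -(u / ρ) := by field_simp
    rw [he] at h
    simpa only [div_eq_mul_inv] using h
  have hb : HasDerivAt (fun x : ℝ => x ^ ((γ - 1) / 2))
      ((γ - 1) / 2 * ρ ^ ((γ - 1) / 2 - 1)) ρ :=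
    Real.hasDerivAt_rpow_const (Or.inl hρ.ne')
  have hd := (hasDerivAt_id ρ).mul
    ((isUnitWeight_kineticWeight hγ hγ3).hasDerivAt_integral ha hb)
  have hfun : (fun x => etaCheck γ x (ρ * u)) =ᶠ[nhds ρ] (id * fun x => ∫ t,
      (1/2 * (ρ * u / x + x ^ ((γ - 1) / 2) * t) * |ρ * u / x + x ^ ((γ - 1) / 2) * t|)
        * kineticWeight γ t) := by
    filter_upwards [lt_mem_nhds hρ] with x hx
    exact etaCheck_eq hγ hx _
  rw [etaCheckRho, hfun.deriv_eq, hd.deriv]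
  simp only [id, mul_div_cancel_left₀ u hρ.ne']
  rw [Real.rpow_sub_one hρ.ne']
  field_simp
  ring

lemma Gfun_eq {γ ρ : ℝ} (hγ : 1 < γ) (hγ3 : γ ≠ 3) (hρ : 0 < ρ) (u : ℝ) :
    Gfun γ ρ u =
      (∫ t, (1/2 * (u + ρ ^ ((γ - 1) / 2) * t) * |u + ρ ^ ((γ - 1) / 2) * t|)
          * kineticWeight γ t)
        + (γ - 1) / 2 * ρ ^ ((γ - 1) / 2) *
          ∫ t, (t * |u + ρ ^ ((γ - 1) / 2) * t|) * kineticWeight γ t := by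
  rw [Gfun, etaCheckRho_eq hγ hγ3 hρ, etaCheckM_eq hγ hγ3 hρ]
  ring

/-- For `γ = 3` the exponent vanishes and, as `0 ^ 0 = 1`, the integrand is not integrable. -/
lemma etaCheck_three (ρ m : ℝ) : etaCheck 3 ρ m = 0 := by
  refine integral_undef fun h => ?_
  have h1 : IntegrableOn (fun _ : ℝ => (1 / 2 : ℝ)) (Ioi 1) := by
    refine Integrable.mono' h.norm.integrableOn (by fun_prop) ?_
    filter_upwards [ae_restrict_mem measurableSet_Ioi] with s hs
    have hs' : (1 : ℝ) < s := hs
    norm_num [abs_of_pos (zero_lt_one.trans hs')]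
    nlinarith
  rw [integrableOn_const_iff] at h1
  simp at h1

lemma Gfun_three (ρ u : ℝ) : Gfun 3 ρ u = 0 := by
  simp [Gfun, etaCheckRho, etaCheckM, etaCheck_three]

/-- there is `M > 0` depending only on `γ` such that
`|∂_ρ G| ≤ M(ρ^{θ−1}|u| + ρ^{2θ−1})` and `|∂_u G| ≤ M(|u| + ρ^θ)` for all `ρ > 0`, `u ∈ ℝ`,
where `θ = (γ−1)/2`. -/
theorem G_derivative_bounds (γ : ℝ) (hγ : 1 < γ) :
    ∃ M : ℝ, 0 < M ∧ ∀ ρ : ℝ, 0 < ρ → ∀ u : ℝ,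
      |deriv (fun x => Gfun γ x u) ρ|
          ≤ M * (ρ ^ ((γ - 1) / 2 - 1) * |u| + ρ ^ (γ - 1 - 1)) ∧
      |deriv (fun v => Gfun γ ρ v) u| ≤ M * (|u| + ρ ^ ((γ - 1) / 2)) := by
  rcases eq_or_ne γ 3 with rfl | hγ3
  · refine ⟨1, one_pos, fun ρ hρ u => ?_⟩
    simp only [Gfun_three, deriv_const, abs_zero, one_mul]
    constructor <;> positivity
  set θ := (γ - 1) / 2 with hθ
  have hθpos : 0 < θ := by rw [hθ]; linarith
  have hw := isUnitWeight_kineticWeight hγ hγ3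
  set C := 4 * (1 + θ) * ∫ t, kineticWeight γ t with hC
  have hC0 : 0 ≤ C := mul_nonneg (by positivity) hw.integral_nonneg
  refine ⟨C * (1 + 2 * θ) + 1, by positivity, fun ρ hρ u => ?_⟩
  have hr : 0 < ρ ^ θ := Real.rpow_pos_of_pos hρ _
  constructor
  · have hd : HasDerivAt (fun x : ℝ => x ^ θ) (θ * ρ ^ (θ - 1)) ρ :=
      Real.hasDerivAt_rpow_const (Or.inl hρ.ne')
    have hd0 : 0 < θ * ρ ^ (θ - 1) := mul_pos hθpos (Real.rpow_pos_of_pos hρ _)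
    have hlip : ∀ᶠ x in nhds ρ, |x ^ θ - ρ ^ θ| ≤ 2 * (θ * ρ ^ (θ - 1)) * |x - ρ| := by
      filter_upwards [(hasDerivAt_iff_isLittleO.mp hd).def hd0] with x hx
      rw [Real.norm_eq_abs, Real.norm_eq_abs, smul_eq_mul] at hx
      have h := abs_add_le (x ^ θ - ρ ^ θ - (x - ρ) * (θ * ρ ^ (θ - 1)))
        ((x - ρ) * (θ * ρ ^ (θ - 1)))
      rw [sub_add_cancel, abs_mul (x - ρ), abs_of_pos hd0] at h
      linarith
    have hclose : ∀ᶠ x in nhds ρ, |x ^ θ - ρ ^ θ| ≤ ρ ^ θ := by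
      filter_upwards [hd.continuousAt (Metric.closedBall_mem_nhds (ρ ^ θ) hr)] with x hx
      exact hx
    have hbound : ‖deriv (fun x => Gfun γ x u) ρ‖
        ≤ C * (|u| + ρ ^ θ) * (2 * (θ * ρ ^ (θ - 1))) := by
      refine norm_deriv_le_of_lip' (by positivity) ?_
      filter_upwards [hlip, hclose, lt_mem_nhds hρ] with x hx1 hx2 hx
      rw [Gfun_eq hγ hγ3 hx, Gfun_eq hγ hγ3 hρ, Real.norm_eq_abs, Real.norm_eq_abs]
      refine (hw.abs_integral_sub_le hθpos.le hr.le (by simpa using hr.le) hx2).trans ?_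
      rw [sub_self, abs_zero, zero_add, mul_assoc _ _ |x - ρ|, ← hC]
      gcongr
    have hpow : ρ ^ θ * ρ ^ (θ - 1) = ρ ^ (γ - 1 - 1) := by
      rw [← Real.rpow_add hρ]
      congr 1
      rw [hθ]
      ring
    refine hbound.trans ?_
    calc C * (|u| + ρ ^ θ) * (2 * (θ * ρ ^ (θ - 1)))
        = C * (2 * θ) * (ρ ^ (θ - 1) * |u| + ρ ^ θ * ρ ^ (θ - 1)) := by ring
      _ ≤ _ := by
        rw [hpow]
        gcongr
        linarith
  · have hbound : ‖deriv (fun v => Gfun γ ρ v) u‖ ≤ C * (|u| + ρ ^ θ) := by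
      refine norm_deriv_le_of_lip' (by positivity) ?_
      filter_upwards [Metric.closedBall_mem_nhds u hr] with v hv
      rw [Gfun_eq hγ hγ3 hρ, Gfun_eq hγ hγ3 hρ, Real.norm_eq_abs, Real.norm_eq_abs]
      refine (hw.abs_integral_sub_le hθpos.le hr.le hv (by simpa [hθ] using hr.le)).trans_eq ?_
      rw [sub_self, abs_zero, add_zero]
    refine hbound.trans ?_
    gcongr
    nlinarith
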